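/- Let n ≥ 1 and β > 0. There exists a constant C = C(n, β) > 0 such that for every Lebesgue measurable set E ⊂ ℝ^n of finite measure, ∫_E dist(x, E^c)^β dx ≤ C · |E|^{1 + β/n}. More precisely, if B is a ball with |B| = |E|, then ∫_E dist(x, E^c)^β dx ≤ ∫_B dist(x, B^c)^β dx. -/

import Mathlib

/-!
By the layer-cake formula, `∫_E dist(x, Eᶜ)^β dx` is `β ∫₀^∞ t^(β-1) |E_t| dt`, where
`E_t = {x | dist(x, Eᶜ) > t}` is the inner parallel set. Hence it suffices that, among sets of given
volume, balls maximise `|E_t|` (`volume_inner_parallel_le`).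

Since `E_t + B(0, t) ⊆ E`, this is the Brunn–Minkowski inequality for `E_t` and a ball: if
`|E_t| = |B(0, r)|` then `|E| ≥ |B(0, r + t)|` (`volume_ball_add_le`). Brunn–Minkowski is obtained in
its multiplicative form `|A|^a |B|^b ≤ |a A + b B|` by induction on the dimension
(`brunn_minkowski_pi`), slicing and applying the one-dimensional Prékopa–Leindler inequality
(`prekopa_leindler_real`) to the volumes of the slices. The latter follows from
`|A| + |B| ≤ |A + B|` on the line, applied to superlevel sets, and the inequality between weighted
arithmetic and geometric means.

The explicit constant comes from comparison with a ball `B` of the same volume, whose points are all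
within `2ρ` of `Bᶜ`, where `ρ` is its radius.
-/

open MeasureTheory Metric

/-! ### The Prékopa–Leindler inequality on the line -/

theorem ennreal_geom_mean_le_arith_mean (a b : ℝ) (ha : 0 < a) (hb : 0 < b) (hab : a + b = 1)
    (x y : ENNReal) :
    x ^ a * y ^ b ≤ ENNReal.ofReal a * x + ENNReal.ofReal b * y := by
  have ha' : ENNReal.ofReal a ≠ 0 := by simpa using ha
  have hb' : ENNReal.ofReal b ≠ 0 := by simpa using hb
  rcases eq_or_ne x ⊤ with rfl | hx
  · simp [ENNReal.mul_top ha']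
  rcases eq_or_ne y ⊤ with rfl | hy
  · simp [ENNReal.mul_top hb']
  have h := Real.geom_mean_le_arith_mean2_weighted ha.le hb.le
    (ENNReal.toReal_nonneg (a := x)) (ENNReal.toReal_nonneg (a := y)) hab
  have h2 := ENNReal.ofReal_le_ofReal h
  rwa [ENNReal.ofReal_mul (by positivity), ENNReal.ofReal_add (by positivity) (by positivity),
    ENNReal.ofReal_mul ha.le, ENNReal.ofReal_mul hb.le,
    ← ENNReal.ofReal_rpow_of_nonneg (by positivity) ha.le,
    ← ENNReal.ofReal_rpow_of_nonneg (by positivity) hb.le,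
    ENNReal.ofReal_toReal hx, ENNReal.ofReal_toReal hy] at h2

/-- The translates `K + min L` and `max K + L` both lie in `K + L` and meet only in the point
`max K + min L`. -/
theorem compact_volume_add_le {K L C : Set ℝ} (hK : IsCompact K) (hL : IsCompact L)
    (hKn : K.Nonempty) (hLn : L.Nonempty) (h : ∀ x ∈ K, ∀ y ∈ L, x + y ∈ C) :
    volume K + volume L ≤ volume C := by
  obtain ⟨p, hpK, hp⟩ := hK.exists_isGreatest hKn
  obtain ⟨q, hqL, hq⟩ := hL.exists_isLeast hLn
  have hd : AEDisjoint volume ((fun x => x + q) '' K) ((fun y => p + y) '' L) := by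
    refine measure_mono_null (t := {p + q}) ?_ (by simp)
    rintro z ⟨⟨x, hx, rfl⟩, ⟨y, hy, hxy⟩⟩
    have h1 := hp hx
    have h2 := hq hy
    simp only at hxy
    simp only [Set.mem_singleton_iff]
    linarith
  have hm : NullMeasurableSet ((fun y => p + y) '' L) volume :=
    ((hL.image (by fun_prop)).measurableSet).nullMeasurableSet
  have e1 : volume ((fun x => x + q) '' K) = volume K := by
    simp
  have e2 : volume ((fun y => p + y) '' L) = volume L := by
    simp
  rw [← e1, ← e2, ← measure_union₀ hm hd]
  apply measure_mono
  rintro z (⟨x, hx, rfl⟩ | ⟨y, hy, rfl⟩)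
  · exact h x hx q hqL
  · exact h p hpK y hy

/-- One-dimensional Brunn–Minkowski inequality for measurable sets, by inner regularity. The set
`C ⊇ A + B` need not be measurable. -/
theorem real_volume_add_le {A B C : Set ℝ} (hA : MeasurableSet A) (hB : MeasurableSet B)
    (hAn : A.Nonempty) (hBn : B.Nonempty) (h : ∀ x ∈ A, ∀ y ∈ B, x + y ∈ C) :
    volume A + volume B ≤ volume C := by
  obtain ⟨p, hp⟩ := hAn
  obtain ⟨q, hq⟩ := hBn
  rw [hA.measure_eq_iSup_isCompact, hB.measure_eq_iSup_isCompact]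
  simp only [iSup_and']
  refine ENNReal.biSup_add_biSup_le' ⟨∅, by simp⟩ ⟨∅, by simp⟩ ?_
  rintro K ⟨hKA, hK⟩ L ⟨hLB, hL⟩
  calc volume K + volume L ≤ volume (insert p K) + volume (insert q L) := by
        gcongr <;> exact Set.subset_insert _ _
    _ ≤ _ := compact_volume_add_le (hK.insert p) (hL.insert q) ⟨p, by simp⟩ ⟨q, by simp⟩
        fun x hx y hy => h x (Set.insert_subset hp hKA hx) y (Set.insert_subset hq hLB hy)

theorem real_volume_convex_comb_le {a b : ℝ} (ha : 0 < a) (hb : 0 < b)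
    {A B C : Set ℝ} (hA : MeasurableSet A) (hB : MeasurableSet B)
    (hAn : A.Nonempty) (hBn : B.Nonempty) (h : ∀ x ∈ A, ∀ y ∈ B, a * x + b * y ∈ C) :
    ENNReal.ofReal a * volume A + ENNReal.ofReal b * volume B ≤ volume C := by
  have := real_volume_add_le (hA.const_smul₀ a) (hB.const_smul₀ b) (hAn.smul_set) (hBn.smul_set)
    (C := C) (by
      rintro _ ⟨x, hx, rfl⟩ _ ⟨y, hy, rfl⟩
      exact h x hx y hy)
  simpa [Measure.addHaar_smul, abs_of_pos ha, abs_of_pos hb] using this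

/-- Layer-cake formula for `[0, 1]`-valued functions in `ℝ≥0∞`. -/
theorem layer_cake_ennreal {f : ℝ → ENNReal} (hf : Measurable f) (hf1 : ∀ x, f x ≤ 1) :
    ∫⁻ x, f x = ∫⁻ t in Set.Ioi (0 : ℝ), volume {x | ENNReal.ofReal t < f x} := by
  have hfin : ∀ x, f x ≠ ⊤ := fun x => ((hf1 x).trans_lt ENNReal.one_lt_top).ne
  have h := lintegral_eq_lintegral_meas_lt (f := fun x => (f x).toReal) volume
    (Filter.Eventually.of_forall fun x => ENNReal.toReal_nonneg) hf.ennreal_toReal.aemeasurable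
  simp only [ENNReal.ofReal_toReal (hfin _)] at h
  rw [h]
  refine setLIntegral_congr_fun measurableSet_Ioi fun t ht => ?_
  simp only [ENNReal.ofReal_lt_iff_lt_toReal (le_of_lt ht) (hfin _)]

/-- Normalised Prékopa–Leindler inequality on `ℝ`: when both suprema are `1`, the superlevel sets of
`f` and `g` at each height `t < 1` are nonempty, so the one-dimensional Brunn–Minkowski inequality
applies to them and the arithmetic mean of the integrals is bounded. -/
theorem lintegral_convex_comb_le {a b : ℝ} (ha : 0 < a) (hb : 0 < b) (hab : a + b = 1)
    {f g h : ℝ → ENNReal} (hf : Measurable f) (hg : Measurable g) (hh : Measurable h)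
    (hf1 : ⨆ x, f x = 1) (hg1 : ⨆ x, g x = 1)
    (H : ∀ x y, f x ^ a * g y ^ b ≤ h (a * x + b * y)) :
    ENNReal.ofReal a * (∫⁻ x, f x) + ENNReal.ofReal b * (∫⁻ x, g x) ≤ ∫⁻ x, h x := by
  have hfle : ∀ x, f x ≤ 1 := fun x => hf1 ▸ le_iSup f x
  have hgle : ∀ x, g x ≤ 1 := fun x => hg1 ▸ le_iSup g x
  have anti : ∀ k : ℝ → ENNReal,
      Measurable fun t : ℝ => volume {x | ENNReal.ofReal t < k x} := fun k =>
    Antitone.measurable fun s t hst => measure_mono fun x hx =>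
      (ENNReal.ofReal_le_ofReal hst).trans_lt hx
  calc _ = ∫⁻ t in Set.Ioi (0 : ℝ), (ENNReal.ofReal a * volume {x | ENNReal.ofReal t < f x} +
          ENNReal.ofReal b * volume {x | ENNReal.ofReal t < g x}) := by
        rw [lintegral_add_left ((anti f).const_mul _), lintegral_const_mul _ (anti f),
          lintegral_const_mul _ (anti g), layer_cake_ennreal hf hfle, layer_cake_ennreal hg hgle]
    _ ≤ ∫⁻ t in Set.Ioi (0 : ℝ), volume {x | ENNReal.ofReal t < min (h x) 1} := by
        refine setLIntegral_mono (anti _) fun t ht => ?_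
        have ht : 0 < t := ht
        rcases lt_or_ge t 1 with ht1 | ht1
        · have ht1' : ENNReal.ofReal t < 1 := by simpa using ht1
          refine real_volume_convex_comb_le ha hb (measurableSet_lt measurable_const hf)
            (measurableSet_lt measurable_const hg) (lt_iSup_iff.1 (ht1'.trans_eq hf1.symm))
            (lt_iSup_iff.1 (ht1'.trans_eq hg1.symm)) fun x hx y hy => ?_
          refine lt_min (lt_of_lt_of_le ?_ (H x y)) ht1'
          have hx : ENNReal.ofReal t < f x := hx
          have hy : ENNReal.ofReal t < g y := hy
          calc ENNReal.ofReal t = ENNReal.ofReal t ^ a * ENNReal.ofReal t ^ b := by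
                rw [← ENNReal.rpow_add_of_nonneg _ _ ha.le hb.le, hab, ENNReal.rpow_one]
            _ < f x ^ a * g y ^ b := by
                exact ENNReal.mul_lt_mul (ENNReal.rpow_lt_rpow hx ha) (ENNReal.rpow_lt_rpow hy hb)
        · have ht1' : 1 ≤ ENNReal.ofReal t := by simpa using ht1
          have e1 : {x | ENNReal.ofReal t < f x} = ∅ :=
            Set.eq_empty_of_forall_notMem fun x hx => absurd (ht1'.trans_lt hx) (hfle x).not_gt
          have e2 : {x | ENNReal.ofReal t < g x} = ∅ :=
            Set.eq_empty_of_forall_notMem fun x hx => absurd (ht1'.trans_lt hx) (hgle x).not_gt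
          simp [e1, e2]
    _ = ∫⁻ x, min (h x) 1 :=
        (layer_cake_ennreal (hh.min measurable_const) fun x => min_le_right _ _).symm
    _ ≤ _ := lintegral_mono fun x => min_le_left _ _

/-- Prékopa–Leindler inequality on `ℝ` for bounded functions: dividing by the suprema reduces it to
the normalised case. -/
theorem prekopa_leindler_bounded {a b : ℝ} (ha : 0 < a) (hb : 0 < b) (hab : a + b = 1)
    {f g h : ℝ → ENNReal} (hf : Measurable f) (hg : Measurable g) (hh : Measurable h)
    (hf1 : ⨆ x, f x ≠ ⊤) (hg1 : ⨆ x, g x ≠ ⊤)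
    (H : ∀ x y, f x ^ a * g y ^ b ≤ h (a * x + b * y)) :
    (∫⁻ x, f x) ^ a * (∫⁻ x, g x) ^ b ≤ ∫⁻ x, h x := by
  set M := ⨆ x, f x with hM
  set N := ⨆ x, g x with hN
  rcases eq_or_ne M 0 with hM0 | hM0
  · have : ∀ x, f x = 0 := by simpa [hM] using hM0
    simp [this, ENNReal.zero_rpow_of_pos ha]
  rcases eq_or_ne N 0 with hN0 | hN0
  · have : ∀ x, g x = 0 := by simpa [hN] using hN0
    simp [this, ENNReal.zero_rpow_of_pos hb]
  have key := lintegral_convex_comb_le ha hb hab (hf.const_mul M⁻¹) (hg.const_mul N⁻¹)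
    (hh.const_mul (M⁻¹ ^ a * N⁻¹ ^ b))
    (by rw [← ENNReal.mul_iSup, ← hM, ENNReal.inv_mul_cancel hM0 hf1])
    (by rw [← ENNReal.mul_iSup, ← hN, ENNReal.inv_mul_cancel hN0 hg1])
    (fun x y => by
      rw [ENNReal.mul_rpow_of_nonneg _ _ ha.le, ENNReal.mul_rpow_of_nonneg _ _ hb.le,
        mul_mul_mul_comm]
      gcongr
      exact H x y)
  rw [lintegral_const_mul _ hf, lintegral_const_mul _ hg, lintegral_const_mul _ hh] at key
  have key2 := (ennreal_geom_mean_le_arith_mean a b ha hb hab _ _).trans key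
  rw [ENNReal.mul_rpow_of_nonneg _ _ ha.le, ENNReal.mul_rpow_of_nonneg _ _ hb.le,
        mul_mul_mul_comm] at key2
  refine (ENNReal.mul_le_mul_iff_right ?_ ?_).1 key2
  · simp [ENNReal.rpow_eq_zero_iff, hf1, hg1, ha.not_gt, hb.not_gt]
  · refine ENNReal.mul_ne_top ?_ ?_ <;> apply ENNReal.rpow_ne_top_of_nonneg <;>
      simp [ha.le, hb.le, hM0, hN0]

/-- Prékopa–Leindler inequality on `ℝ`, by truncation and monotone convergence. -/
theorem prekopa_leindler_real {a b : ℝ} (ha : 0 < a) (hb : 0 < b) (hab : a + b = 1)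
    {f g h : ℝ → ENNReal} (hf : Measurable f) (hg : Measurable g) (hh : Measurable h)
    (H : ∀ x y, f x ^ a * g y ^ b ≤ h (a * x + b * y)) :
    (∫⁻ x, f x) ^ a * (∫⁻ x, g x) ^ b ≤ ∫⁻ x, h x := by
  have lim : ∀ k : ℝ → ENNReal, Measurable k →
      Filter.Tendsto (fun n : ℕ => ∫⁻ x, min (k x) n) Filter.atTop (nhds (∫⁻ x, k x)) := by
    intro k hk
    refine lintegral_tendsto_of_tendsto_of_monotone
      (fun n => (hk.min measurable_const).aemeasurable)
      (Filter.Eventually.of_forall fun x m n hmn => min_le_min le_rfl (by exact_mod_cast hmn))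
      (Filter.Eventually.of_forall fun x => ?_)
    have := (tendsto_const_nhds (x := k x)).min ENNReal.tendsto_nat_nhds_top
    simpa using this
  rcases eq_or_ne (∫⁻ x, f x) 0 with hf0 | hf0
  · simp [hf0, ENNReal.zero_rpow_of_pos ha]
  rcases eq_or_ne (∫⁻ x, g x) 0 with hg0 | hg0
  · simp [hg0, ENNReal.zero_rpow_of_pos hb]
  have hT := ENNReal.Tendsto.mul
    ((lim f hf).ennrpow_const a) (Or.inl (by simp [ENNReal.rpow_eq_zero_iff, hf0, ha.not_gt]))
    ((lim g hg).ennrpow_const b) (Or.inl (by simp [ENNReal.rpow_eq_zero_iff, hg0, hb.not_gt]))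
  refine le_of_tendsto' hT fun n => ?_
  have bd : ∀ k : ℝ → ENNReal, ⨆ x, min (k x) n ≠ ⊤ := fun k =>
    ((iSup_le fun x => min_le_right _ _).trans_lt (ENNReal.natCast_lt_top n)).ne
  refine prekopa_leindler_bounded ha hb hab (hf.min measurable_const) (hg.min measurable_const) hh
    (bd f) (bd g) fun x y => le_trans ?_ (H x y)
  gcongr <;> exact min_le_left _ _

/-! ### The Brunn–Minkowski inequality -/

/-- Multiplicative Brunn–Minkowski inequality on `ℝⁿ`, for any measurable `C` containing `a A + b B`.
The induction on `n` slices along the first coordinate: the slice volumes satisfy the hypothesis of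
the one-dimensional Prékopa–Leindler inequality. -/
theorem brunn_minkowski_pi {a b : ℝ} (ha : 0 < a) (hb : 0 < b) (hab : a + b = 1) (n : ℕ) :
    ∀ {A B C : Set (Fin n → ℝ)}, MeasurableSet A → MeasurableSet B → MeasurableSet C →
    (∀ x ∈ A, ∀ y ∈ B, a • x + b • y ∈ C) →
    volume A ^ a * volume B ^ b ≤ volume C := by
  induction n with
  | zero =>
    intro A B C _ _ _ h
    rcases A.eq_empty_or_nonempty with rfl | ⟨x, hx⟩
    · simp [ENNReal.zero_rpow_of_pos ha]
    rcases B.eq_empty_or_nonempty with rfl | ⟨y, hy⟩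
    · simp [ENNReal.zero_rpow_of_pos hb]
    have hC := h x hx y hy
    rw [Set.Nonempty.eq_univ (s := A) ⟨x, hx⟩,
      Set.Nonempty.eq_univ (s := B) ⟨y, hy⟩,
      Set.Nonempty.eq_univ (s := C) ⟨_, hC⟩]
    rw [← ENNReal.rpow_add_of_nonneg _ _ ha.le hb.le, hab, ENNReal.rpow_one]
  | succ n ih =>
    intro A B C hA hB hC h
    let e := (MeasurableEquiv.piFinSuccAbove (fun _ : Fin (n + 1) => ℝ) 0)
    have he : MeasurePreserving e.symm volume volume :=
      (volume_preserving_piFinSuccAbove (fun _ : Fin (n + 1) => ℝ) 0).symm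
    have cons : ∀ s (x : Fin n → ℝ), e.symm (s, x) = Fin.cons s x := fun s x => by
      simp [e, MeasurableEquiv.piFinSuccAbove]; rfl
    have sec : ∀ S : Set (Fin (n + 1) → ℝ), MeasurableSet S →
        volume S = ∫⁻ s, volume (Prod.mk s ⁻¹' (e.symm ⁻¹' S)) := fun S hS => by
      rw [← he.measure_preimage_equiv S, Measure.volume_eq_prod,
        Measure.prod_apply (e.symm.measurable hS)]
    have hms : ∀ S : Set (Fin (n + 1) → ℝ), MeasurableSet S →
        Measurable fun s => volume (Prod.mk s ⁻¹' (e.symm ⁻¹' S)) := fun S hS =>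
      measurable_measure_prodMk_left (e.symm.measurable hS)
    have hss : ∀ (S : Set (Fin (n + 1) → ℝ)) s, MeasurableSet S →
        MeasurableSet (Prod.mk s ⁻¹' (e.symm ⁻¹' S)) := fun S s hS =>
      measurable_prodMk_left (e.symm.measurable hS)
    rw [sec A hA, sec B hB, sec C hC]
    refine prekopa_leindler_real ha hb hab (hms A hA) (hms B hB) (hms C hC) fun s t => ?_
    refine ih (hss A s hA) (hss B t hB) (hss C _ hC) fun x hx y hy => ?_
    simp only [Set.mem_preimage, cons] at hx hy ⊢
    convert h _ hx _ hy using 1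
    ext i
    refine Fin.cases ?_ (fun j => ?_) i <;> simp

theorem brunn_minkowski_euclidean {a b : ℝ} (ha : 0 < a) (hb : 0 < b) (hab : a + b = 1) {n : ℕ}
    {A B C : Set (EuclideanSpace ℝ (Fin n))} (hA : MeasurableSet A) (hB : MeasurableSet B)
    (hC : MeasurableSet C) (h : ∀ x ∈ A, ∀ y ∈ B, a • x + b • y ∈ C) :
    volume A ^ a * volume B ^ b ≤ volume C := by
  let e := (MeasurableEquiv.toLp 2 (Fin n → ℝ))
  have he : MeasurePreserving e volume volume :=
    (EuclideanSpace.volume_preserving_symm_measurableEquiv_toLp (Fin n)).symm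
  rw [← he.measure_preimage_equiv A, ← he.measure_preimage_equiv B, ← he.measure_preimage_equiv C]
  exact brunn_minkowski_pi ha hb hab n (e.measurable hA) (e.measurable hB) (e.measurable hC)
    fun x hx y hy => h _ hx _ hy

open scoped Pointwise in
/-- Additive Brunn–Minkowski inequality when one summand is a ball: if `A` has the volume of a ball
of radius `r` and `A + B(0, t) ⊆ C`, then `C` has at least the volume of a ball of radius `r + t`. -/
theorem volume_ball_add_le {n : ℕ} {A C : Set (EuclideanSpace ℝ (Fin n))}
    (hA : MeasurableSet A) (hC : MeasurableSet C) {r t : ℝ} (hr : 0 < r) (ht : 0 < t)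
    (hAr : volume A = volume (ball (0 : EuclideanSpace ℝ (Fin n)) r))
    (h : ∀ x ∈ A, ∀ y ∈ ball (0 : EuclideanSpace ℝ (Fin n)) t, x + y ∈ C) :
    volume (ball (0 : EuclideanSpace ℝ (Fin n)) (r + t)) ≤ volume C := by
  have hrt : 0 < r + t := by positivity
  have ha : 0 < r / (r + t) := by positivity
  have hb : 0 < t / (r + t) := by positivity
  have hab : r / (r + t) + t / (r + t) = 1 := by field_simp
  have hV : volume (((r + t) / r) • A) = volume (ball (0 : EuclideanSpace ℝ (Fin n)) (r + t)) := by
    rw [Measure.addHaar_smul, hAr, Measure.addHaar_ball_of_pos _ _ hr,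
      Measure.addHaar_ball_of_pos _ _ hrt, ← mul_assoc, ← ENNReal.ofReal_mul (abs_nonneg _),
      abs_of_pos (by positivity), ← mul_pow, div_mul_cancel₀ _ hr.ne']
  -- With these weights `a⁻¹ A` and `b⁻¹ B(0, t) = B(0, r + t)` have equal volumes, so their weighted
  -- geometric mean is again that volume.
  have key := brunn_minkowski_euclidean ha hb hab (hA.const_smul₀ ((r + t) / r))
    (measurableSet_ball (x := (0 : EuclideanSpace ℝ (Fin n))) (ε := r + t)) hC (by
      rintro _ ⟨x, hx, rfl⟩ y hy
      have e : (r / (r + t)) • ((r + t) / r) • x = x := by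
        rw [smul_smul, div_mul_div_cancel₀ hrt.ne', div_self hr.ne', one_smul]
      simp only [e]
      refine h x hx _ ?_
      rw [mem_ball_zero_iff] at hy ⊢
      rw [norm_smul, Real.norm_of_nonneg hb.le, div_mul_eq_mul_div, div_lt_iff₀ hrt]
      gcongr)
  rwa [hV, ← ENNReal.rpow_add_of_nonneg _ _ ha.le hb.le, hab, ENNReal.rpow_one] at key

/-! ### Inner parallel sets and the distance integral -/

/-- Every positive finite volume is the volume of a ball, with the explicit radius
`(v / |B(0, 1)|) ^ (1 / n)`. -/
theorem exists_ball_volume_eq {n : ℕ} (hn : 1 ≤ n) {v : ENNReal} (h0 : v ≠ 0) (hv : v ≠ ⊤) :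
    ∃ r : ℝ, 0 < r ∧
      ENNReal.ofReal r = (v / volume (ball (0 : EuclideanSpace ℝ (Fin n)) 1)) ^ (1 / n : ℝ) ∧
      ∀ c : EuclideanSpace ℝ (Fin n), volume (ball c r) = v := by
  have hw0 : volume (ball (0 : EuclideanSpace ℝ (Fin n)) 1) ≠ 0 :=
    (measure_ball_pos _ _ one_pos).ne'
  have hwt : volume (ball (0 : EuclideanSpace ℝ (Fin n)) 1) ≠ ⊤ := measure_ball_lt_top.ne
  have hn' : (n : ℝ) ≠ 0 := by positivity
  have q0 : v / volume (ball (0 : EuclideanSpace ℝ (Fin n)) 1) ≠ 0 := by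
    simp [ENNReal.div_eq_zero_iff, h0, hwt]
  have qt : v / volume (ball (0 : EuclideanSpace ℝ (Fin n)) 1) ≠ ⊤ :=
    ENNReal.div_ne_top hv hw0
  set s := (v / volume (ball (0 : EuclideanSpace ℝ (Fin n)) 1)) ^ (1 / n : ℝ) with hs
  have st : s ≠ ⊤ := ENNReal.rpow_ne_top_of_nonneg (by positivity) qt
  have s0 : s ≠ 0 := (ENNReal.rpow_pos (pos_iff_ne_zero.2 q0) qt).ne'
  have hpos := ENNReal.toReal_pos s0 st
  refine ⟨s.toReal, hpos, ENNReal.ofReal_toReal st, fun c => ?_⟩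
  rw [Measure.addHaar_ball_of_pos _ _ hpos, finrank_euclideanSpace_fin,
    ENNReal.ofReal_pow ENNReal.toReal_nonneg, ENNReal.ofReal_toReal st, hs,
    ← ENNReal.rpow_natCast, ← ENNReal.rpow_mul, one_div_mul_cancel hn', ENNReal.rpow_one,
    ENNReal.div_mul_cancel hw0 hwt]

/-- Balls maximise the volume of inner parallel sets. When `ρ ≤ t` the right-hand side is `0`. -/
theorem volume_inner_parallel_le {n : ℕ} (hn : 1 ≤ n) {E : Set (EuclideanSpace ℝ (Fin n))}
    (hE : MeasurableSet E) (hEf : volume E < ⊤) (c : EuclideanSpace ℝ (Fin n)) {ρ t : ℝ}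
    (hρ : volume (ball c ρ) = volume E) (ht : 0 < t) :
    volume {x | t < infDist x Eᶜ} ≤ volume (ball c (ρ - t)) := by
  have : NeZero n := ⟨by omega⟩
  set A := {x | t < infDist x Eᶜ} with hAdef
  have hA : MeasurableSet A := (isOpen_lt continuous_const (continuous_infDist_pt _)).measurableSet
  have hadd : ∀ x ∈ A, ∀ y ∈ ball (0 : EuclideanSpace ℝ (Fin n)) t, x + y ∈ E := by
    intro x hx y hy
    by_contra hxy
    have h1 : infDist x Eᶜ ≤ dist x (x + y) := infDist_le_dist_of_mem hxy
    rw [mem_ball_zero_iff] at hy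
    have hx : t < infDist x Eᶜ := hx
    simp at h1
    linarith
  have hAE : A ⊆ E := fun x hx => by simpa using hadd x hx 0 (by simpa using ht)
  rcases eq_or_ne (volume A) 0 with h0 | h0
  · simp [h0]
  obtain ⟨r, hr, -, hball⟩ := exists_ball_volume_eq hn h0
    ((measure_mono hAE).trans_lt hEf).ne
  have hle := volume_ball_add_le hA hE hr ht (hball 0).symm hadd
  have hrρ : r + t ≤ ρ := by
    by_contra! hlt
    have hρ0 : 0 ≤ ρ := by
      by_contra! hneg
      rw [ball_eq_empty.2 hneg.le, measure_empty] at hρ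
      exact h0 (measure_mono_null hAE hρ.symm)
    rw [← hρ, Measure.addHaar_ball _ _ (by positivity), Measure.addHaar_ball _ c hρ0,
      ENNReal.mul_le_mul_iff_left (measure_ball_pos _ _ one_pos).ne' measure_ball_lt_top.ne,
      ENNReal.ofReal_le_ofReal_iff (by positivity), finrank_euclideanSpace_fin] at hle
    exact absurd hle (pow_lt_pow_left₀ hlt hρ0 (by omega)).not_ge
  rw [← hball c]
  exact measure_mono (ball_subset_ball (by linarith))

theorem lintegral_infDist_compl_le_ball {n : ℕ} (hn : 1 ≤ n) {β : ℝ} (hβ : 0 < β)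
    {E : Set (EuclideanSpace ℝ (Fin n))}
    (hE : MeasurableSet E) (hEf : volume E < ⊤) (c : EuclideanSpace ℝ (Fin n)) (ρ : ℝ)
    (hρ : volume (ball c ρ) = volume E) :
    ∫⁻ x in E, ENNReal.ofReal (infDist x Eᶜ ^ β) ≤
      ∫⁻ x in ball c ρ, ENNReal.ofReal (infDist x (ball c ρ)ᶜ ^ β) := by
  have : NeZero n := ⟨by omega⟩
  have lc : ∀ S : Set (EuclideanSpace ℝ (Fin n)),
      ∫⁻ x in S, ENNReal.ofReal (infDist x Sᶜ ^ β) = ENNReal.ofReal β *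
        ∫⁻ t in Set.Ioi (0 : ℝ), (volume.restrict S) {x | t < infDist x Sᶜ} *
          ENNReal.ofReal (t ^ (β - 1)) := fun S =>
    lintegral_rpow_eq_lintegral_meas_lt_mul _
      (Filter.Eventually.of_forall fun x => infDist_nonneg)
      (continuous_infDist_pt _).measurable.aemeasurable hβ
  rw [lc, lc]
  gcongr ENNReal.ofReal β * ?_
  refine setLIntegral_mono' measurableSet_Ioi fun t ht => ?_
  gcongr ?_ * _
  have ht : 0 < t := ht
  refine (Measure.restrict_apply_le _ _).trans
    ((volume_inner_parallel_le hn hE hEf c hρ ht).trans ?_)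
  rw [Measure.restrict_apply' measurableSet_ball]
  refine measure_mono fun x hx => ?_
  have hxρ : dist x c < ρ - t := hx
  refine ⟨?_, ball_subset_ball (by linarith) hx⟩
  have hρ0 : 0 ≤ ρ := by linarith [dist_nonneg (x := x) (y := c)]
  -- Nonemptiness is needed because `infDist x ∅ = 0`.
  have hne : ((ball c ρ)ᶜ).Nonempty := by
    obtain ⟨y, hy⟩ := (NormedSpace.sphere_nonempty (x := c) (r := ρ)).2 hρ0
    exact ⟨y, by simpa using (mem_sphere.1 hy).ge⟩
  have : ρ - dist x c ≤ infDist x (ball c ρ)ᶜ := by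
    refine (le_infDist hne).2 fun y hy => ?_
    have hy : ρ ≤ dist y c := by simpa using hy
    linarith [dist_triangle y x c, dist_comm x y]
  show t < _
  linarith

/-- Crude bound: points of a ball are within `2ρ` of its boundary sphere. -/
theorem lintegral_infDist_compl_ball_le {n : ℕ} (hn : 1 ≤ n) {β : ℝ} (hβ : 0 < β)
    (c : EuclideanSpace ℝ (Fin n)) {ρ : ℝ} (hρ : 0 < ρ) :
    ∫⁻ x in ball c ρ, ENNReal.ofReal (infDist x (ball c ρ)ᶜ ^ β) ≤
      ENNReal.ofReal (2 * ρ) ^ β * volume (ball c ρ) := by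
  have : NeZero n := ⟨by omega⟩
  obtain ⟨y, hy⟩ := (NormedSpace.sphere_nonempty (x := c) (r := ρ)).2 hρ.le
  have hy' : dist y c = ρ := hy
  rw [← setLIntegral_const]
  refine setLIntegral_mono' measurableSet_ball fun x hx => ?_
  rw [ENNReal.ofReal_rpow_of_nonneg (by positivity) hβ.le]
  gcongr
  · exact infDist_nonneg
  have hx : dist x c < ρ := hx
  have : infDist x (ball c ρ)ᶜ ≤ dist x y := infDist_le_dist_of_mem (by simp [hy'])
  linarith [dist_triangle_right x y c]

/-- Balls maximize the integral of the distance to the complement: for every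
measurable set `E ⊆ ℝⁿ` of finite measure,
`∫_E dist(x, Eᶜ)^β dx ≤ C(n,β) · |E|^{1+β/n}`; more precisely, if `B` is a ball
with `|B| = |E|` then `∫_E dist(x, Eᶜ)^β dx ≤ ∫_B dist(x, Bᶜ)^β dx`. -/
theorem integral_infDist_compl_rpow_le
    (n : ℕ) (hn : 1 ≤ n) (β : ℝ) (hβ : 0 < β) :
    ∃ C : ℝ, 0 < C ∧ ∀ E : Set (EuclideanSpace ℝ (Fin n)),
      MeasurableSet E → volume E < ⊤ →
      (∫⁻ x in E, ENNReal.ofReal (infDist x Eᶜ ^ β) ≤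
          ENNReal.ofReal C * (volume E) ^ (1 + β / n)) ∧
      (∀ (c : EuclideanSpace ℝ (Fin n)) (ρ : ℝ),
          volume (Metric.ball c ρ) = volume E →
          ∫⁻ x in E, ENNReal.ofReal (infDist x Eᶜ ^ β) ≤
            ∫⁻ x in Metric.ball c ρ,
              ENNReal.ofReal (infDist x (Metric.ball c ρ)ᶜ ^ β)) := by
  set w := volume (ball (0 : EuclideanSpace ℝ (Fin n)) 1) with hw
  have hw0 : w ≠ 0 := (measure_ball_pos _ _ one_pos).ne'
  have hwt : w ≠ ⊤ := measure_ball_lt_top.ne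
  have hβn : 0 < β / n := by positivity
  -- `(2r)^β |E|` with `r = (|E| / w)^(1/n)` equals `K |E|^(1 + β/n)`.
  set K : ENNReal := 2 ^ β * w⁻¹ ^ (β / n) with hK
  have hKt : K ≠ ⊤ := ENNReal.mul_ne_top
    (ENNReal.rpow_ne_top_of_nonneg hβ.le (by simp))
    (ENNReal.rpow_ne_top_of_nonneg hβn.le (by simpa using hw0))
  have hK0 : K ≠ 0 := mul_ne_zero
    (ENNReal.rpow_pos (by simp) (by simp)).ne'
    (ENNReal.rpow_pos (by simpa [pos_iff_ne_zero] using hwt) (by simpa using hw0)).ne'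
  refine ⟨K.toReal, ENNReal.toReal_pos hK0 hKt, fun E hE hEf =>
    ⟨?_, fun c ρ h => lintegral_infDist_compl_le_ball hn hβ hE hEf c ρ h⟩⟩
  rcases eq_or_ne (volume E) 0 with h0 | h0
  · rw [Measure.restrict_eq_zero.2 h0]
    simp
  obtain ⟨r, hr, hrs, hball⟩ := exists_ball_volume_eq hn h0 hEf.ne
  refine (lintegral_infDist_compl_le_ball hn hβ hE hEf 0 r (hball 0)).trans
    ((lintegral_infDist_compl_ball_le hn hβ 0 hr).trans_eq ?_)
  rw [hball 0, ENNReal.ofReal_toReal hKt, ENNReal.ofReal_mul zero_le_two, hrs,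
    ENNReal.mul_rpow_of_nonneg _ _ hβ.le, ← ENNReal.rpow_mul, one_div_mul_eq_div,
    ENNReal.div_eq_inv_mul, ENNReal.mul_rpow_of_nonneg _ _ hβn.le,
    ENNReal.rpow_add_of_nonneg _ _ zero_le_one hβn.le, ENNReal.rpow_one, hK, ← hw]
  simp only [ENNReal.ofReal_ofNat]
  ring
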